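/- Let Γ be a thick generalised hexagon, and let x1, x2, x3 be a round-up triple of points of Γ such that x1 and x2 are opposite. Then for all opposite lines L and M of Γ, if at least two of x1, x2, x3 belong to the distance-3 trace [L,M]_3, then all three of x1, x2, x3 belong to [L,M]_3. -/

import Mathlib

/-- An incidence structure of points and lines, each line being a set of points. -/
structure GenHexagon where
  Point : Type
  Line : Type
  pts : Line → Set Point

namespace GenHexagon

variable (Γ : GenHexagon)

/-- Adjacency of the bipartite incidence graph on the disjoint union of points and lines:
a point is adjacent to a line iff the point lies on the line. -/
def incAdj : Γ.Point ⊕ Γ.Line → Γ.Point ⊕ Γ.Line → Prop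
  | Sum.inl x, Sum.inr L => x ∈ Γ.pts L
  | Sum.inr L, Sum.inl x => x ∈ Γ.pts L
  | _, _ => False

/-- The bipartite incidence graph. -/
def incGraph : SimpleGraph (Γ.Point ⊕ Γ.Line) where
  Adj := Γ.incAdj
  symm := ⟨by rintro (x | L) (y | M) h <;> simp_all [incAdj]⟩
  loopless := ⟨by rintro (x | L) h <;> simp_all [incAdj]⟩

/-- `Γ` is a generalised hexagon: its incidence graph has diameter `6` and girth `12`. -/
def IsGenHexagon : Prop :=
  Γ.incGraph.ediam = 6 ∧ Γ.incGraph.egirth = 12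

/-- Two points are collinear if they are distinct and some line contains both. -/
def Collinear (x y : Γ.Point) : Prop :=
  x ≠ y ∧ ∃ L, x ∈ Γ.pts L ∧ y ∈ Γ.pts L

/-- Two points are special if they are distinct, non-collinear, and collinear
to a common point. -/
def Special (x y : Γ.Point) : Prop :=
  x ≠ y ∧ ¬ Γ.Collinear x y ∧ ∃ z, Γ.Collinear x z ∧ Γ.Collinear y z

/-- Two points are opposite if they are distinct, non-collinear and non-special. -/
def Opposite (x y : Γ.Point) : Prop :=
  x ≠ y ∧ ¬ Γ.Collinear x y ∧ ¬ Γ.Special x y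

/-- `Γ` has order `(s, t)`: every line contains exactly `s + 1` points and every
point lies on exactly `t + 1` lines. -/
def HasOrder (s t : ℕ) : Prop :=
  (∀ L, (Γ.pts L).encard = s + 1) ∧ (∀ x, {L | x ∈ Γ.pts L}.encard = t + 1)

/-- `Γ` is thick: every line contains at least `3` points and every point lies on
at least `3` lines. -/
def Thick : Prop :=
  (∀ L, 3 ≤ (Γ.pts L).encard) ∧ (∀ x, 3 ≤ {L | x ∈ Γ.pts L}.encard)

/-- A point is close to a line if it is collinear to exactly one point of that line. -/
def CloseTo (x : Γ.Point) (L : Γ.Line) : Prop :=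
  ∃! y, y ∈ Γ.pts L ∧ Γ.Collinear x y

/-- Two lines are opposite if they are disjoint and no point of one is collinear to
a point of the other. -/
def OppLines (L M : Γ.Line) : Prop :=
  (∀ x ∈ Γ.pts L, x ∉ Γ.pts M) ∧
  (∀ x ∈ Γ.pts L, ∀ y ∈ Γ.pts M, ¬ Γ.Collinear x y)

/-- The distance-3 trace `[L,M]₃` of two (opposite) lines: the set of points close to
both `L` and `M`. -/
def trace3 (L M : Γ.Line) : Set Γ.Point :=
  {x | Γ.CloseTo x L ∧ Γ.CloseTo x M}

/-- The distance-3 trace `[L,M]₃` is regular if `[N,M]₃ = [L,M]₃` for every line `N`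
opposite `M` such that `[N,M]₃` and `[L,M]₃` share at least two points. -/
def RegularTrace3 (L M : Γ.Line) : Prop :=
  ∀ N, Γ.OppLines N M → (Γ.trace3 N M ∩ Γ.trace3 L M).Nontrivial →
    Γ.trace3 N M = Γ.trace3 L M

/-- A hyperbolic line: a set `H` of pairwise special points, all collinear to a common
point `p`, such that for every point `q` opposite `p` to which at least two points of `H`
are special, the set of points special to `q` and collinear to `p` equals `H`. -/
def IsHyperbolicLine (H : Set Γ.Point) : Prop :=
  (∀ x ∈ H, ∀ y ∈ H, x ≠ y → Γ.Special x y) ∧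
  ∃ p, (∀ x ∈ H, Γ.Collinear x p) ∧
    ∀ q, Γ.Opposite q p → {x ∈ H | Γ.Special q x}.Nontrivial →
      {x | Γ.Special q x ∧ Γ.Collinear x p} = H

/-- A round-up triple: no point of `Γ` is opposite exactly one of `x₁, x₂, x₃`. -/
def RoundUpTriple (x₁ x₂ x₃ : Γ.Point) : Prop :=
  ∀ y : Γ.Point,
    ¬ ((Γ.Opposite y x₁ ∧ ¬ Γ.Opposite y x₂ ∧ ¬ Γ.Opposite y x₃) ∨
       (¬ Γ.Opposite y x₁ ∧ Γ.Opposite y x₂ ∧ ¬ Γ.Opposite y x₃) ∨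
       (¬ Γ.Opposite y x₁ ∧ ¬ Γ.Opposite y x₂ ∧ Γ.Opposite y x₃))

/-- A geometric line: a set `T` of points such that each point of `Γ` is either opposite
no member of `T`, or non-opposite to exactly one member of `T`. -/
def IsGeometricLine (T : Set Γ.Point) : Prop :=
  ∀ y : Γ.Point, (∀ x ∈ T, ¬ Γ.Opposite y x) ∨ (∃! x, x ∈ T ∧ ¬ Γ.Opposite y x)

end GenHexagon

namespace GenHexagon

variable {Γ : GenHexagon}

lemma IsGenHexagon.not_isCycle (hΓ : Γ.IsGenHexagon) {v : Γ.Point ⊕ Γ.Line}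
    (w : Γ.incGraph.Walk v v) (hw : w.length < 12) : ¬ w.IsCycle := fun hc => by
  have h := SimpleGraph.le_egirth.mp hΓ.2.ge v w hc
  exact absurd (by exact_mod_cast h) hw.not_ge

lemma adj_point_line {x : Γ.Point} {L : Γ.Line} (h : x ∈ Γ.pts L) :
    Γ.incGraph.Adj (Sum.inl x) (Sum.inr L) := h

lemma adj_line_point {x : Γ.Point} {L : Γ.Line} (h : x ∈ Γ.pts L) :
    Γ.incGraph.Adj (Sum.inr L) (Sum.inl x) := h

/-- Two distinct points lie on at most one line. -/
lemma IsGenHexagon.line_unique (hΓ : Γ.IsGenHexagon) {a b : Γ.Point} {L M : Γ.Line}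
    (hab : a ≠ b) (haL : a ∈ Γ.pts L) (hbL : b ∈ Γ.pts L) (haM : a ∈ Γ.pts M)
    (hbM : b ∈ Γ.pts M) : L = M := by
  by_contra hLM
  refine hΓ.not_isCycle (.cons (adj_point_line haL) <| .cons (adj_line_point hbL) <|
    .cons (adj_point_line hbM) <| .cons (adj_line_point haM) .nil) (by simp) ?_
  simp [SimpleGraph.Walk.cons_isCycle_iff, SimpleGraph.Walk.cons_isPath_iff]
  grind

lemma IsGenHexagon.no_triangle (hΓ : Γ.IsGenHexagon) {a b c : Γ.Point} {L M N : Γ.Line}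
    (hp : [a, b, c].Nodup) (hl : [L, M, N].Nodup)
    (haL : a ∈ Γ.pts L) (hbL : b ∈ Γ.pts L) (hbM : b ∈ Γ.pts M) (hcM : c ∈ Γ.pts M)
    (hcN : c ∈ Γ.pts N) (haN : a ∈ Γ.pts N) : False := by
  refine hΓ.not_isCycle (.cons (adj_point_line haL) <| .cons (adj_line_point hbL) <|
    .cons (adj_point_line hbM) <| .cons (adj_line_point hcM) <|
    .cons (adj_point_line hcN) <| .cons (adj_line_point haN) .nil) (by simp) ?_
  simp [SimpleGraph.Walk.cons_isCycle_iff, SimpleGraph.Walk.cons_isPath_iff] at hp hl ⊢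
  grind

lemma IsGenHexagon.no_quadrangle (hΓ : Γ.IsGenHexagon) {a b c d : Γ.Point}
    {L M N K : Γ.Line} (hp : [a, b, c, d].Nodup) (hl : [L, M, N, K].Nodup)
    (haL : a ∈ Γ.pts L) (hbL : b ∈ Γ.pts L) (hbM : b ∈ Γ.pts M) (hcM : c ∈ Γ.pts M)
    (hcN : c ∈ Γ.pts N) (hdN : d ∈ Γ.pts N) (hdK : d ∈ Γ.pts K) (haK : a ∈ Γ.pts K) :
    False := by
  refine hΓ.not_isCycle (.cons (adj_point_line haL) <| .cons (adj_line_point hbL) <|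
    .cons (adj_point_line hbM) <| .cons (adj_line_point hcM) <|
    .cons (adj_point_line hcN) <| .cons (adj_line_point hdN) <|
    .cons (adj_point_line hdK) <| .cons (adj_line_point haK) .nil) (by simp) ?_
  simp [SimpleGraph.Walk.cons_isCycle_iff, SimpleGraph.Walk.cons_isPath_iff] at hp hl ⊢
  grind

lemma IsGenHexagon.no_pentagon (hΓ : Γ.IsGenHexagon) {a b c d e : Γ.Point}
    {L M N K J : Γ.Line} (hp : [a, b, c, d, e].Nodup) (hl : [L, M, N, K, J].Nodup)
    (haL : a ∈ Γ.pts L) (hbL : b ∈ Γ.pts L) (hbM : b ∈ Γ.pts M) (hcM : c ∈ Γ.pts M)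
    (hcN : c ∈ Γ.pts N) (hdN : d ∈ Γ.pts N) (hdK : d ∈ Γ.pts K) (heK : e ∈ Γ.pts K)
    (heJ : e ∈ Γ.pts J) (haJ : a ∈ Γ.pts J) : False := by
  refine hΓ.not_isCycle (.cons (adj_point_line haL) <| .cons (adj_line_point hbL) <|
    .cons (adj_point_line hbM) <| .cons (adj_line_point hcM) <|
    .cons (adj_point_line hcN) <| .cons (adj_line_point hdN) <|
    .cons (adj_point_line hdK) <| .cons (adj_line_point heK) <|
    .cons (adj_point_line heJ) <| .cons (adj_line_point haJ) .nil) (by simp) ?_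
  simp [SimpleGraph.Walk.cons_isCycle_iff, SimpleGraph.Walk.cons_isPath_iff] at hp hl ⊢
  grind

lemma Collinear.symm {x y : Γ.Point} (h : Γ.Collinear x y) : Γ.Collinear y x :=
  ⟨h.1.symm, h.2.imp fun _ hL => hL.symm⟩

lemma Opposite.symm {x y : Γ.Point} (h : Γ.Opposite x y) : Γ.Opposite y x :=
  ⟨h.1.symm, fun hc => h.2.1 hc.symm, fun hs => h.2.2
    ⟨h.1, h.2.1, hs.2.2.imp fun _ hz => hz.symm⟩⟩

lemma not_opposite_self (x : Γ.Point) : ¬ Γ.Opposite x x := fun h => h.1 rfl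

/-- A point close to a line is opposite no point of that line. -/
lemma CloseTo.not_opposite {x y : Γ.Point} {L : Γ.Line} (h : Γ.CloseTo x L)
    (hy : y ∈ Γ.pts L) : ¬ Γ.Opposite y x := by
  obtain ⟨p, ⟨hpL, hxp⟩, -⟩ := h
  rintro ⟨hne, hnc, hns⟩
  have hyp : y ≠ p := by
    rintro rfl
    exact hnc hxp.symm
  exact hns ⟨hne, hnc, p, ⟨hyp, L, hy, hpL⟩, hxp⟩

/-- A point off a line is collinear to at most one point of that line. -/
lemma IsGenHexagon.collinear_unique (hΓ : Γ.IsGenHexagon) {x a b : Γ.Point} {L : Γ.Line}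
    (hx : x ∉ Γ.pts L) (ha : a ∈ Γ.pts L) (hb : b ∈ Γ.pts L)
    (hxa : Γ.Collinear x a) (hxb : Γ.Collinear x b) : a = b := by
  by_contra hab
  obtain ⟨hxa', A, hxA, haA⟩ := hxa
  obtain ⟨hxb', B, hxB, hbB⟩ := hxb
  have hAB : A ≠ B := by
    rintro rfl
    exact hx (hΓ.line_unique hab haA hbB ha hb ▸ hxA)
  exact hΓ.no_triangle (a := x) (b := a) (c := b) (L := A) (M := L) (N := B)
    (by simp; grind) (by simp; grind) hxA haA ha hb hbB hxB

/-- A point off a line that is opposite neither of two distinct points of the line is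
close to the line. -/
lemma IsGenHexagon.closeTo_of_not_opposite (hΓ : Γ.IsGenHexagon) {x a b : Γ.Point}
    {L : Γ.Line} (hx : x ∉ Γ.pts L) (hab : a ≠ b) (ha : a ∈ Γ.pts L) (hb : b ∈ Γ.pts L)
    (hxa : ¬ Γ.Opposite x a) (hxb : ¬ Γ.Opposite x b) : Γ.CloseTo x L := by
  suffices h : ∃ y, y ∈ Γ.pts L ∧ Γ.Collinear x y by
    obtain ⟨y, hy, hxy⟩ := h
    exact ⟨y, ⟨hy, hxy⟩, fun z hz => hΓ.collinear_unique hx hz.1 hy hz.2 hxy⟩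
  by_contra! hL
  have special_of_mem : ∀ y ∈ Γ.pts L, ¬ Γ.Opposite x y →
      ∃ u, Γ.Collinear x u ∧ Γ.Collinear y u := fun y hy hxy => by
    have hne : x ≠ y := by
      rintro rfl
      exact hx hy
    by_contra hu
    exact hxy ⟨hne, hL y hy, fun hs => hu hs.2.2⟩
  obtain ⟨u, hxu, hau⟩ := special_of_mem a ha hxa
  obtain ⟨v, hxv, hbv⟩ := special_of_mem b hb hxb
  have huL : u ∉ Γ.pts L := fun h => hL u h hxu
  have hvL : v ∉ Γ.pts L := fun h => hL v h hxv
  by_cases huv : u = v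
  · subst huv
    exact hab (hΓ.collinear_unique huL ha hb hau.symm hbv.symm)
  obtain ⟨hxu', U, hxU, huU⟩ := hxu
  obtain ⟨hxv', V, hxV, hvV⟩ := hxv
  obtain ⟨hau', A, haA, huA⟩ := hau
  obtain ⟨hbv', B, hbB, hvB⟩ := hbv
  have not_mem_both : ∀ y ∈ Γ.pts L, ∀ K, x ∈ Γ.pts K → y ∉ Γ.pts K := fun y hy K hxK hyK =>
    hL y hy ⟨fun h => hx (h ▸ hy), K, hxK, hyK⟩
  have haU := not_mem_both a ha U hxU
  have hbU := not_mem_both b hb U hxU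
  have haV := not_mem_both a ha V hxV
  have hbV := not_mem_both b hb V hxV
  have hAB : A ≠ B := by
    rintro rfl
    exact huL (hΓ.line_unique hab haA hbB ha hb ▸ huA)
  by_cases hUV : U = V
  · subst hUV
    exact hΓ.no_quadrangle (a := u) (b := a) (c := b) (d := v) (L := A) (M := L) (N := B)
      (K := U) (by simp; grind) (by simp; grind) huA haA ha hb hbB hvB hvV huU
  · exact hΓ.no_pentagon (a := x) (b := u) (c := a) (d := b) (e := v) (L := U) (M := A)
      (N := L) (K := B) (J := V) (by simp; grind) (by simp; grind)
      hxU huU huA haA ha hb hbB hvB hvV hxV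

lemma RoundUpTriple.swap {x y z : Γ.Point} (h : Γ.RoundUpTriple x y z) :
    Γ.RoundUpTriple y x z := fun w => by
  have := h w
  tauto

lemma RoundUpTriple.rotate {x y z : Γ.Point} (h : Γ.RoundUpTriple x y z) :
    Γ.RoundUpTriple y z x := fun w => by
  have := h w
  tauto

lemma RoundUpTriple.opposite {x y z : Γ.Point} (h : Γ.RoundUpTriple x y z)
    (hxy : Γ.Opposite x y) : Γ.Opposite x z := by
  have := h x
  have := not_opposite_self x
  tauto

/-- If two points of a round-up triple are close to a line, then so is the third one. -/
lemma RoundUpTriple.closeTo {x y z : Γ.Point} (h : Γ.RoundUpTriple x y z)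
    (hΓ : Γ.IsGenHexagon) (hth : Γ.Thick) (hxz : Γ.Opposite x z) {L : Γ.Line}
    (hx : Γ.CloseTo x L) (hy : Γ.CloseTo y L) : Γ.CloseTo z L := by
  have hz : z ∉ Γ.pts L := fun hz => hx.not_opposite hz hxz.symm
  have hzL : ∀ w ∈ Γ.pts L, ¬ Γ.Opposite z w := fun w hw hzw => by
    have := h w
    have := hx.not_opposite hw
    have := hy.not_opposite hw
    have := hzw.symm
    tauto
  have hcard : 1 < (Γ.pts L).encard := lt_of_lt_of_le (by norm_num) (hth.1 L)
  obtain ⟨a, b, ha, hb, hab⟩ := Set.one_lt_encard_iff.mp hcard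
  exact hΓ.closeTo_of_not_opposite hz hab ha hb (hzL a ha) (hzL b hb)

/-- A distance-3 trace containing two points of a round-up triple contains the third one. -/
lemma RoundUpTriple.mem_trace3 {x y z : Γ.Point} (h : Γ.RoundUpTriple x y z)
    (hΓ : Γ.IsGenHexagon) (hth : Γ.Thick) (hxz : Γ.Opposite x z) {L M : Γ.Line}
    (hx : x ∈ Γ.trace3 L M) (hy : y ∈ Γ.trace3 L M) : z ∈ Γ.trace3 L M :=
  ⟨h.closeTo hΓ hth hxz hx.1 hy.1, h.closeTo hΓ hth hxz hx.2 hy.2⟩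

end GenHexagon

/-- A round-up triple of points of a thick generalised hexagon with `x₁` and `x₂`
opposite is contained in every distance-3 trace containing at least two of its points. -/
theorem roundUpTriple_opposite (Γ : GenHexagon) (hΓ : Γ.IsGenHexagon) (hth : Γ.Thick)
    (x₁ x₂ x₃ : Γ.Point) (hrut : Γ.RoundUpTriple x₁ x₂ x₃)
    (hopp : Γ.Opposite x₁ x₂) :
    ∀ L M, Γ.OppLines L M →
      ((x₁ ∈ Γ.trace3 L M ∧ x₂ ∈ Γ.trace3 L M) ∨
       (x₁ ∈ Γ.trace3 L M ∧ x₃ ∈ Γ.trace3 L M) ∨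
       (x₂ ∈ Γ.trace3 L M ∧ x₃ ∈ Γ.trace3 L M)) →
      x₁ ∈ Γ.trace3 L M ∧ x₂ ∈ Γ.trace3 L M ∧ x₃ ∈ Γ.trace3 L M := by
  rintro L M - (⟨h₁, h₂⟩ | ⟨h₁, h₃⟩ | ⟨h₂, h₃⟩)
  · exact ⟨h₁, h₂, hrut.mem_trace3 hΓ hth (hrut.opposite hopp) h₁ h₂⟩
  · exact ⟨h₁, hrut.swap.rotate.mem_trace3 hΓ hth hopp h₁ h₃, h₃⟩
  · exact ⟨hrut.rotate.mem_trace3 hΓ hth hopp.symm h₂ h₃, h₂, h₃⟩
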